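/- arXiv:1209.4203 — 2 statements merged into one kernel-verified Lean document; each statement's English description precedes it below -/
import Mathlib

section
/- Let z* be the unique point of (0,1) with p(z*) = 1 (see the accompanying uniqueness statement). Then for every w ∈ (0,1], the equation z^ν − w·h(z) = 0 has exactly ν zeros in the open unit disk |z| < 1, counted with multiplicity; that is, there exist z_1, …, z_ν with |z_j| < 1 and a function g, continuous on |z| ≤ 1 and holomorphic and nonvanishing on |z| < 1, such that z^ν − w·h(z) = (∏_{j=1}^ν (z − z_j))·g(z) for all |z| ≤ 1. -/
/-!
On circles `|z| = s` with `s < 1` close to `1`, the term `w h(z)` is strictly dominated by `z ^ ν`: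
`|w h(z)| ≤ h(s) < s ^ ν`, because `h(s) - s ^ ν` vanishes at `s = 1` with left derivative equal to
the mean payoff, which is positive (`exists_tsum_lt_pow`). In particular all zeros of
`u(z) = z ^ ν - w h(z)` in the open disk lie in a smaller closed disk, so there are finitely many
and they can be divided out, leaving a zero-free cofactor (`exists_factor_disk`).

The number of zeros is found by Rouché's argument (`card_eq_of_norm_sub_lt`): on `|z| = s` the
quotient `u(z) / z ^ ν` lies in the disk of radius `1` around `1`, hence has a logarithm, so the
logarithmic derivatives of `u` and `z ^ ν` have the same integral. For functions in factored form
this integral is `2πi` times the number of linear factors (`circleIntegral_logDeriv_prod`).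

Dominance may fail on the unit circle itself when `w = 1`, which is why smaller circles are used.
On the boundary the cofactor is defined as `u` divided by the product of the linear factors, which
has no zeros there; this gives its continuity on the closed disk.
-/

open Filter Finset Metric

/-- `h(z) = z^ν p(z) = ∑_{k=0}^∞ p_{k-ν} z^k`. -/
noncomputable def genH (ν : ℕ) (p : ℤ → ℝ) (z : ℂ) : ℂ :=
  ∑' k : ℕ, (p ((k : ℤ) - (ν : ℤ)) : ℂ) * z ^ k

/-! ### Dominance near the unit circle -/

/-- The positive mean `∑ (k - n) a k > 0` is the left derivative at `1` of `∑ a k x^k - x^n`,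
a function vanishing at `1`; hence `∑ a k x^k < x^n` just to the left of `1`. The derivative is
taken of a finite partial sum only, since the terms `a k (x^n - x^k)` with `k ≥ n` are
nonnegative. -/
lemma exists_tsum_lt_pow (n : ℕ) (a : ℕ → ℝ) (ha : ∀ k, 0 ≤ a k) (hs : HasSum a 1)
    (hm : Summable fun k : ℕ => ((k : ℝ) - n) * a k)
    (hpos : 0 < ∑' k : ℕ, ((k : ℝ) - n) * a k) :
    ∃ r ∈ Set.Ioo (0 : ℝ) 1, ∀ x ∈ Set.Ioo r 1, ∑' k, a k * x ^ k < x ^ n := by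
  have hlim := hm.hasSum.tendsto_sum_nat
  obtain ⟨N, hN, hnN⟩ :=
    ((hlim.eventually (lt_mem_nhds hpos)).and (eventually_ge_atTop n)).exists
  let φ : ℝ → ℝ := fun x => ∑ k ∈ range N, a k * (x ^ n - x ^ k)
  have hφ1 : φ 1 = 0 := by simp [φ]
  have hd : HasDerivAt φ (∑ k ∈ range N, a k * ((n : ℝ) - k)) 1 := by
    refine HasDerivAt.fun_sum fun k _ => ?_
    simpa using ((hasDerivAt_pow n (1 : ℝ)).sub (hasDerivAt_pow k (1 : ℝ))).const_mul (a k)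
  have hneg : deriv φ 1 < 0 := by
    rw [hd.deriv]
    have : ∑ k ∈ range N, a k * ((n : ℝ) - k) = -∑ k ∈ range N, ((k : ℝ) - n) * a k := by
      rw [← sum_neg_distrib]
      exact sum_congr rfl fun k _ => by ring
    linarith
  have hev := eventually_nhdsWithin_sign_eq_of_deriv_neg hneg hφ1
  obtain ⟨ε, hε, hball⟩ := Metric.eventually_nhds_iff.1 hev
  have hr : max (1 - ε) (1 / 2) < 1 := max_lt (by linarith) (by norm_num)
  refine ⟨max (1 - ε) (1 / 2), ⟨lt_of_lt_of_le (by norm_num) (le_max_right _ _), hr⟩, ?_⟩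
  rintro x ⟨hx0, hx1⟩
  have hxε : 1 - ε < x := (le_max_left _ _).trans_lt hx0
  have hxpos : 0 < x := lt_of_lt_of_le (by norm_num) ((le_max_right _ _).trans hx0.le)
  have hφx : 0 < φ x := by
    have h := @hball x (by rw [Real.dist_eq, abs_lt]; constructor <;> linarith)
    rw [sign_pos (by linarith : 0 < 1 - x)] at h
    exact sign_eq_one_iff.1 h
  have hsx : Summable fun k => a k * x ^ k :=
    hs.summable.of_nonneg_of_le (fun k => mul_nonneg (ha k) (by positivity))
      fun k => mul_le_of_le_one_right (ha k) (pow_le_one₀ hxpos.le hx1.le)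
  have hdiff : HasSum (fun k => a k * (x ^ n - x ^ k)) (x ^ n - ∑' k, a k * x ^ k) := by
    have := (hs.mul_right (x ^ n)).sub hsx.hasSum
    simpa [mul_sub] using this
  have hle : φ x ≤ x ^ n - ∑' k, a k * x ^ k := by
    refine sum_le_hasSum _ (fun k hk => mul_nonneg (ha k) (sub_nonneg.2 ?_)) hdiff
    exact pow_le_pow_of_le_one hxpos.le hx1.le (hnN.trans (by simpa using hk))
  linarith

/-! ### Dividing out the zeros -/

/-- Division by the full power of `z - a` at a zero `a` of finite order. -/
lemma exists_factor_at {U : Set ℂ} (hU : IsOpen U) {f : ℂ → ℂ} (hf : DifferentiableOn ℂ f U)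
    {a : ℂ} (ha : a ∈ U) (hne : ∃ᶠ z in nhds a, f z ≠ 0) :
    ∃ (n : ℕ) (g : ℂ → ℂ), DifferentiableOn ℂ g U ∧ g a ≠ 0 ∧ ∀ z ∈ U, f z = (z - a) ^ n * g z := by
  have hfa : AnalyticAt ℂ f a := hf.analyticAt (hU.mem_nhds ha)
  have hne' : ¬∀ᶠ z in nhds a, f z = 0 := fun h =>
    hne (h.mono fun _ hz hn => hn hz)
  obtain ⟨n, g, hg, hga, hfg⟩ :=
    hfa.exists_eventuallyEq_pow_smul_nonzero_iff.2 hne'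
  have heq : (fun z => if z = a then g a else f z / (z - a) ^ n) =ᶠ[nhds a] g := by
    filter_upwards [hfg] with z hz
    split_ifs with h
    · rw [h]
    · have : z - a ≠ 0 := sub_ne_zero.2 h
      rw [hz, smul_eq_mul]
      field_simp
  refine ⟨n, fun z => if z = a then g a else f z / (z - a) ^ n, ?_, by simpa using hga, ?_⟩
  · intro z hz
    apply DifferentiableAt.differentiableWithinAt
    by_cases h : z = a
    · subst h
      exact hg.differentiableAt.congr_of_eventuallyEq heq
    · have h1 : DifferentiableAt ℂ (fun z => f z / (z - a) ^ n) z :=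
        (hf.differentiableAt (hU.mem_nhds hz)).div (by fun_prop)
          (pow_ne_zero _ (sub_ne_zero.2 h))
      refine h1.congr_of_eventuallyEq ?_
      filter_upwards [isOpen_ne.mem_nhds h] with y hy
      exact if_neg hy
  · intro z hz
    by_cases h : z = a
    · subst h
      simpa using hfg.self_of_nhds
    · have : z - a ≠ 0 := sub_ne_zero.2 h
      simp only [if_neg h]
      field_simp

/-- Successive division by the factors at the points of a finite set containing all zeros. The
multiset `M` lists the zeros with multiplicity. -/
lemma exists_factor_finset {U : Set ℂ} (hU : IsOpen U) (S : Finset ℂ) :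
    ∀ f : ℂ → ℂ, DifferentiableOn ℂ f U → (∀ z ∈ U, f z = 0 → z ∈ S) →
    ∃ (M : Multiset ℂ) (g : ℂ → ℂ), (∀ a ∈ M, a ∈ U ∧ f a = 0) ∧ DifferentiableOn ℂ g U ∧
      (∀ z ∈ U, g z ≠ 0) ∧ ∀ z ∈ U, f z = (M.map fun a => z - a).prod * g z := by
  induction S using Finset.induction_on with
  | empty =>
    intro f hf hz
    exact ⟨0, f, by simp, hf, fun z hzU h => by simpa using hz z hzU h, by simp⟩
  | insert a S haS ih =>
    intro f hf hz
    by_cases ha : a ∈ U ∧ f a = 0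
    · obtain ⟨haU, hfa⟩ := ha
      have hne : ∃ᶠ z in nhds a, f z ≠ 0 := by
        -- Near `a`, but off `a` itself, the finite set `insert a S` is avoided.
        have h1 : ∀ᶠ z in nhdsWithin a {a}ᶜ, f z ≠ 0 := by
          have h2 : ∀ᶠ z in nhds a, z ∉ S :=
            (S.finite_toSet.isClosed.isOpen_compl).mem_nhds (by simpa using haS)
          filter_upwards [nhdsWithin_le_nhds h2, nhdsWithin_le_nhds (hU.mem_nhds haU),
            self_mem_nhdsWithin] with z hzS hzU hza h0
          rcases Finset.mem_insert.1 (hz z hzU h0) with h | h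
          · exact hza h
          · exact hzS h
        exact h1.frequently.filter_mono nhdsWithin_le_nhds
      obtain ⟨n, g, hg, hga, hfg⟩ := exists_factor_at hU hf haU hne
      obtain ⟨M, g', hM, hg', hne', hgM⟩ := ih g hg (by
        intro z hzU h0
        rcases Finset.mem_insert.1 (hz z hzU (by rw [hfg z hzU, h0, mul_zero])) with h | h
        · exact absurd (h ▸ h0) hga
        · exact h)
      refine ⟨Multiset.replicate n a + M, g', ?_, hg', hne', ?_⟩
      · intro b hb
        rcases Multiset.mem_add.1 hb with h | h
        · rw [Multiset.eq_of_mem_replicate h]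
          exact ⟨haU, hfa⟩
        · exact ⟨(hM b h).1, by rw [hfg b (hM b h).1, (hM b h).2, mul_zero]⟩
      · intro z hzU
        rw [hfg z hzU, hgM z hzU]
        simp [mul_assoc]
    · refine ih f hf fun z hzU h0 => ?_
      rcases Finset.mem_insert.1 (hz z hzU h0) with h | h
      · exact absurd (h ▸ ⟨hzU, h0⟩) ha
      · exact h

/-- A holomorphic function on the unit disk whose zeros stay away from the boundary has finitely
many of them, so all can be divided out. -/
lemma exists_factor_disk {f : ℂ → ℂ} (hf : DifferentiableOn ℂ f (ball 0 1)) {r : ℝ}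
    (hr0 : 0 < r) (hr : r < 1) (hz : ∀ z ∈ ball (0 : ℂ) 1, f z = 0 → ‖z‖ ≤ r) :
    ∃ (M : Multiset ℂ) (g : ℂ → ℂ), (∀ a ∈ M, ‖a‖ ≤ r) ∧
      DifferentiableOn ℂ g (ball 0 1) ∧
      (∀ z ∈ ball (0 : ℂ) 1, g z ≠ 0) ∧
      ∀ z ∈ ball (0 : ℂ) 1, f z = (M.map fun a => z - a).prod * g z := by
  have hfin : {z ∈ ball (0 : ℂ) 1 | f z = 0}.Finite := by
    by_contra hinf
    obtain ⟨x, hx, hacc⟩ := Set.Infinite.exists_accPt_of_subset_isCompact hinf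
      (isCompact_closedBall (0 : ℂ) r) fun z hz' => by simpa using hz z hz'.1 hz'.2
    have hx1 : x ∈ ball (0 : ℂ) 1 := closedBall_subset_ball hr hx
    have hfreq : ∃ᶠ z in nhdsWithin x {x}ᶜ, f z = 0 := by
      rw [accPt_iff_frequently] at hacc
      rw [frequently_nhdsWithin_iff]
      exact hacc.mono fun z h => ⟨h.2.2, h.1⟩
    have h0 := (hf.analyticOnNhd isOpen_ball).eqOn_zero_of_preconnected_of_frequently_eq_zero
      (convex_ball (0 : ℂ) 1).isPreconnected hx1 hfreq
    have hmem : (((r + 1) / 2 : ℝ) : ℂ) ∈ ball (0 : ℂ) 1 := by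
      rw [mem_ball_zero_iff, Complex.norm_real, Real.norm_of_nonneg (by linarith)]
      linarith
    have := hz _ hmem (h0 hmem)
    rw [Complex.norm_real, Real.norm_of_nonneg (by linarith)] at this
    linarith
  obtain ⟨M, g, hM, h⟩ := exists_factor_finset isOpen_ball hfin.toFinset f hf
    fun z hz h0 => by simpa using ⟨by simpa using hz, h0⟩
  exact ⟨M, g, fun a ha => hz a (hM a ha).1 (hM a ha).2, h⟩

/-! ### Counting the zeros -/

/-- A product of linear factors with a cofactor does not vanish on a circle enclosing all roots
of the factors, where the cofactor does not vanish. -/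
lemma prod_mul_ne_zero {M : Multiset ℂ} {g : ℂ → ℂ} {s : ℝ} {y : ℂ} (hy : ‖y‖ = s)
    (hM : ∀ a ∈ M, ‖a‖ < s) (hg : g y ≠ 0) :
    (M.map fun a => y - a).prod * g y ≠ 0 := by
  refine mul_ne_zero (Multiset.prod_ne_zero fun h => ?_) hg
  obtain ⟨a, ha, h0⟩ := Multiset.mem_map.1 h
  have := hM a ha
  rw [← sub_eq_zero.1 h0, hy] at this
  exact lt_irrefl _ this

lemma differentiableOn_prod_mul (M : Multiset ℂ) {g : ℂ → ℂ} {U : Set ℂ}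
    (hg : DifferentiableOn ℂ g U) :
    DifferentiableOn ℂ (fun z => (M.map fun a => z - a).prod * g z) U := by
  refine DifferentiableOn.mul ?_ hg
  induction M using Multiset.induction_on with
  | empty => simp
  | cons a M ih =>
    simp only [Multiset.map_cons, Multiset.prod_cons]
    exact (by fun_prop : DifferentiableOn ℂ (fun z => z - a) U).mul ih

/-- The argument principle for a function given in factored form. -/
lemma circleIntegral_logDeriv_prod {s : ℝ} (hs0 : 0 < s) (hs1 : s < 1) {g : ℂ → ℂ}
    (hg : DifferentiableOn ℂ g (ball 0 1)) (hg0 : ∀ z ∈ ball (0 : ℂ) 1, g z ≠ 0)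
    (M : Multiset ℂ) (hM : ∀ a ∈ M, ‖a‖ < s) :
    (∮ z in C(0, s), logDeriv (fun z => (M.map fun a => z - a).prod * g z) z) =
      M.card * (2 * Real.pi * Complex.I) := by
  have hsub : closedBall (0 : ℂ) s ⊆ ball 0 1 := closedBall_subset_ball hs1
  induction M using Multiset.induction_on with
  | empty =>
    simp only [Multiset.map_zero, Multiset.prod_zero, one_mul, Multiset.card_zero, Nat.cast_zero,
      zero_mul]
    have hd : DifferentiableOn ℂ (logDeriv g) (ball 0 1) := (hg.deriv isOpen_ball).div hg hg0
    exact DiffContOnCl.circleIntegral_eq_zero hs0.le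
      (hd.mono (by rwa [closure_ball _ hs0.ne'])).diffContOnCl
  | cons a M ih =>
    have hM' : ∀ b ∈ M, ‖b‖ < s := fun b hb => hM b (Multiset.mem_cons_of_mem hb)
    have ha : ‖a‖ < s := hM a (Multiset.mem_cons_self a M)
    set F : ℂ → ℂ := fun z => (M.map fun a => z - a).prod * g z with hF
    have hFd : DifferentiableOn ℂ F (ball 0 1) := differentiableOn_prod_mul M hg
    have hF0 : ∀ z ∈ sphere (0 : ℂ) s, F z ≠ 0 := fun z hz =>
      prod_mul_ne_zero (by simpa using hz) hM' (hg0 z (hsub (sphere_subset_closedBall hz)))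
    have ha0 : ∀ z ∈ sphere (0 : ℂ) s, z - a ≠ 0 := by
      intro z hz h
      rw [← sub_eq_zero.1 h] at ha
      exact ha.ne (by simpa using hz)
    have hcongr : Set.EqOn
        (logDeriv (fun z => ((a ::ₘ M).map fun a => z - a).prod * g z))
        (fun z => (z - a)⁻¹ + logDeriv F z) (sphere 0 s) := by
      intro z hz
      have hfun : (fun z => ((a ::ₘ M).map fun a => z - a).prod * g z) =
          fun z => (z - a) * F z := by
        funext z
        simp [hF, mul_assoc]
      rw [hfun, logDeriv_mul z (ha0 z hz) (hF0 z hz) (by fun_prop)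
        (hFd.differentiableAt (isOpen_ball.mem_nhds (hsub (sphere_subset_closedBall hz))))]
      simp [logDeriv_apply]
    have hi1 : CircleIntegrable (fun z => (z - a)⁻¹) 0 s :=
      ContinuousOn.circleIntegrable hs0.le
        ((by fun_prop : ContinuousOn (fun z => z - a) (sphere 0 s)).inv₀ ha0)
    have hi2 : CircleIntegrable (fun z => logDeriv F z) 0 s := by
      have hss := sphere_subset_closedBall.trans hsub
      exact ContinuousOn.circleIntegrable hs0.le
        (((hFd.deriv isOpen_ball).continuousOn.mono hss).div (hFd.continuousOn.mono hss) hF0)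
    rw [circleIntegral.integral_congr hs0.le hcongr, circleIntegral.integral_add hi1 hi2, ih hM',
      circleIntegral.integral_sub_inv_of_mem_ball (by simpa using ha)]
    push_cast [Multiset.card_cons]
    ring

/-- Rouché's theorem against `z ^ n`. On the circle the quotient of the factored function by `z ^ n`
stays within distance `1` of `1`, so it has a logarithm there and its
logarithmic derivative integrates to zero. -/
lemma card_eq_of_norm_sub_lt {s : ℝ} (hs0 : 0 < s) (hs1 : s < 1) {g : ℂ → ℂ}
    (hg : DifferentiableOn ℂ g (ball 0 1)) (hg0 : ∀ z ∈ ball (0 : ℂ) 1, g z ≠ 0)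
    (M : Multiset ℂ) (hM : ∀ a ∈ M, ‖a‖ < s) (n : ℕ)
    (hlt : ∀ z ∈ sphere (0 : ℂ) s, ‖(M.map fun a => z - a).prod * g z - z ^ n‖ < s ^ n) :
    M.card = n := by
  have hss : sphere (0 : ℂ) s ⊆ ball 0 1 :=
    sphere_subset_closedBall.trans (closedBall_subset_ball hs1)
  set F : ℂ → ℂ := fun z => (M.map fun a => z - a).prod * g z with hF
  have hFd : DifferentiableOn ℂ F (ball 0 1) := differentiableOn_prod_mul M hg
  have hF0 : ∀ z ∈ sphere (0 : ℂ) s, F z ≠ 0 := fun z hz =>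
    prod_mul_ne_zero (by simpa using hz) hM (hg0 z (hss hz))
  have hP0 : ∀ z ∈ sphere (0 : ℂ) s, z ^ n ≠ 0 := by
    intro z hz
    refine pow_ne_zero _ (norm_pos_iff.1 ?_)
    rw [mem_sphere_zero_iff_norm.1 hz]
    exact hs0
  have hI1 := circleIntegral_logDeriv_prod hs0 hs1 hg hg0 M hM
  have hI2 : (∮ z in C(0, s), logDeriv (fun z => z ^ n) z) =
      n * (2 * Real.pi * Complex.I) := by
    have := circleIntegral_logDeriv_prod hs0 hs1 (g := fun _ => 1)
      (by fun_prop) (by simp) (Multiset.replicate n 0)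
      (fun a ha => by simpa [Multiset.eq_of_mem_replicate ha] using hs0)
    simpa using this
  have hFat : ∀ z ∈ sphere (0 : ℂ) s, DifferentiableAt ℂ F z := fun z hz =>
    hFd.differentiableAt (isOpen_ball.mem_nhds (hss hz))
  have hzero : (∮ z in C(0, s), (logDeriv F z - logDeriv (fun z => z ^ n) z)) = 0 := by
    refine circleIntegral.integral_eq_zero_of_hasDerivWithinAt
      (f := fun z => Complex.log (F z / z ^ n)) hs0.le fun z hz => ?_
    have hq : DifferentiableAt ℂ (fun z => F z / z ^ n) z :=
      (hFat z hz).div (by fun_prop) (hP0 z hz)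
    have hslit : F z / z ^ n ∈ Complex.slitPlane := by
      have h1 : ‖(F z - z ^ n) / z ^ n‖ < 1 := by
        rw [norm_div, norm_pow, mem_sphere_zero_iff_norm.1 hz, div_lt_one (by positivity)]
        exact hlt z hz
      have h2 : F z / z ^ n = 1 + (F z - z ^ n) / z ^ n := by
        have := hP0 z hz
        field_simp
        ring
      rw [h2]
      exact Complex.mem_slitPlane_of_norm_lt_one h1
    have := (hq.hasDerivAt.clog hslit).hasDerivWithinAt (s := sphere 0 s)
    rw [← logDeriv_div (g := fun z => z ^ n) z (hF0 z hz) (hP0 z hz) (hFat z hz) (by fun_prop)]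
    exact this
  have hi1 : CircleIntegrable (fun z => logDeriv F z) 0 s :=
    ContinuousOn.circleIntegrable hs0.le
      (((hFd.deriv isOpen_ball).continuousOn.mono hss).div (hFd.continuousOn.mono hss) hF0)
  have hi2 : CircleIntegrable (fun z => logDeriv (fun z : ℂ => z ^ n) z) 0 s := by
    refine ContinuousOn.circleIntegrable hs0.le (ContinuousOn.div ?_ (by fun_prop) hP0)
    have : deriv (fun z : ℂ => z ^ n) = fun z => (n : ℂ) * z ^ (n - 1) := by
      funext z
      simp
    rw [this]
    fun_prop
  rw [circleIntegral.integral_sub hi1 hi2, hI1, hI2, sub_eq_zero] at hzero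
  exact_mod_cast mul_right_cancel₀ Complex.two_pi_I_ne_zero hzero

/-! ### The factorization on the closed disk -/

/-- For every `w ∈ (0,1]`, the equation `z^ν − w·h(z) = 0` has exactly `ν` zeros in the
open unit disk, counted with multiplicity: there are `z_1, …, z_ν` with `|z_j| < 1` and a
function `g`, continuous on the closed unit disk, holomorphic and nonvanishing on the open
unit disk, such that `z^ν − w·h(z) = (∏_j (z − z_j))·g(z)` on the closed unit disk. -/
theorem ruin_root_count
    (ν : ℕ) (hν : 1 ≤ ν) (p : ℤ → ℝ)
    (hp_nonneg : ∀ k : ℤ, 0 ≤ p k)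
    (hp_low : ∀ k : ℤ, k < -(ν : ℤ) → p k = 0)
    (hp_min : 0 < p (-(ν : ℤ)))
    (hp_sum : HasSum (fun k : ℕ => p ((k : ℤ) - (ν : ℤ))) 1)
    (hmean_sum : Summable (fun k : ℕ => ((k : ℝ) - (ν : ℝ)) * p ((k : ℤ) - (ν : ℤ))))
    (hmean_pos : 0 < ∑' k : ℕ, ((k : ℝ) - (ν : ℝ)) * p ((k : ℤ) - (ν : ℤ))) :
    ∀ w : ℝ, w ∈ Set.Ioc (0 : ℝ) 1 →
      ∃ zr : Fin ν → ℂ, (∀ j, ‖zr j‖ < 1) ∧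
        ∃ g : ℂ → ℂ,
          ContinuousOn g (closedBall (0 : ℂ) 1) ∧
          DifferentiableOn ℂ g (ball (0 : ℂ) 1) ∧
          (∀ z ∈ ball (0 : ℂ) 1, g z ≠ 0) ∧
          ∀ z ∈ closedBall (0 : ℂ) 1,
            z ^ ν - (w : ℂ) * genH ν p z = (∏ j, (z - zr j)) * g z := by
  rintro w ⟨hw0, hw1⟩
  set a : ℕ → ℝ := fun k => p ((k : ℤ) - (ν : ℤ)) with ha_def
  have ha : ∀ k, 0 ≤ a k := fun k => hp_nonneg _
  have hbound : ∀ k : ℕ, ∀ z : ℂ, ‖z‖ ≤ 1 → ‖(a k : ℂ) * z ^ k‖ ≤ a k := by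
    intro k z hz
    rw [norm_mul, norm_pow, Complex.norm_real, Real.norm_of_nonneg (ha k)]
    exact mul_le_of_le_one_right (ha k) (pow_le_one₀ (norm_nonneg _) hz)
  have hHc : ContinuousOn (genH ν p) (closedBall 0 1) :=
    continuousOn_tsum (f := fun (k : ℕ) (z : ℂ) => (a k : ℂ) * z ^ k)
      (fun k => by fun_prop) hp_sum.summable fun k z hz => hbound k z (by simpa using hz)
  have hHd : DifferentiableOn ℂ (genH ν p) (ball 0 1) :=
    Complex.differentiableOn_tsum_of_summable_norm
      (F := fun (k : ℕ) (z : ℂ) => (a k : ℂ) * z ^ k) hp_sum.summable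
      (fun k => by fun_prop) isOpen_ball fun k z hz => hbound k z (mem_ball_zero_iff.1 hz).le
  have hHle : ∀ z : ℂ, ‖z‖ ≤ 1 → ‖genH ν p z‖ ≤ ∑' k, a k * ‖z‖ ^ k := by
    intro z hz
    have hn : ∀ k : ℕ, ‖(a k : ℂ) * z ^ k‖ = a k * ‖z‖ ^ k := fun k => by
      rw [norm_mul, norm_pow, Complex.norm_real, Real.norm_of_nonneg (ha k)]
    have hsum : Summable fun k : ℕ => ‖(a k : ℂ) * z ^ k‖ :=
      hp_sum.summable.of_nonneg_of_le (fun k => norm_nonneg _) fun k => hbound k z hz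
    calc ‖genH ν p z‖ ≤ ∑' k : ℕ, ‖(a k : ℂ) * z ^ k‖ := norm_tsum_le_tsum_norm hsum
      _ = _ := tsum_congr hn
  obtain ⟨r, ⟨hr0, hr1⟩, hr⟩ := exists_tsum_lt_pow ν a ha hp_sum hmean_sum hmean_pos
  have hlt : ∀ z : ℂ, r < ‖z‖ → ‖z‖ < 1 → ‖(w : ℂ) * genH ν p z‖ < ‖z‖ ^ ν := by
    intro z h1 h2
    rw [norm_mul, Complex.norm_real, Real.norm_of_nonneg hw0.le]
    calc w * ‖genH ν p z‖ ≤ ‖genH ν p z‖ := mul_le_of_le_one_left (norm_nonneg _) hw1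
      _ ≤ _ := hHle z h2.le
      _ < _ := hr _ ⟨h1, h2⟩
  set u : ℂ → ℂ := fun z => z ^ ν - (w : ℂ) * genH ν p z with hu
  have huc : ContinuousOn u (closedBall 0 1) := by fun_prop
  have hud : DifferentiableOn ℂ u (ball 0 1) := by fun_prop
  obtain ⟨M, g, hM, hg, hg0, hug⟩ := exists_factor_disk hud hr0 hr1 (by
    intro z hz h0
    by_contra! h
    have := hlt z h (by simpa using hz)
    rw [← sub_eq_zero.1 h0, norm_pow] at this
    exact lt_irrefl _ this)
  have hcard : M.card = ν := by
    refine card_eq_of_norm_sub_lt (s := (r + 1) / 2) (by linarith) (by linarith) hg hg0 M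
      (fun a ha => by linarith [hM a ha]) ν fun z hz => ?_
    have hz' : ‖z‖ = (r + 1) / 2 := by simpa using hz
    rw [← hug z (by rw [mem_ball_zero_iff]; linarith), ← hz']
    simpa [hu] using hlt z (by linarith) (by linarith)
  -- Enumerate the multiset of zeros by `Fin ν`.
  obtain ⟨zr, hzr⟩ : ∃ zr : Fin ν → ℂ, (univ : Finset (Fin ν)).val.map zr = M := by
    have hl : M.toList.length = ν := by rw [Multiset.length_toList, hcard]
    refine ⟨fun i => M.toList.get (i.cast hl.symm), ?_⟩
    conv_rhs => rw [← M.coe_toList]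
    rw [Fin.univ_val_map]
    congr 1
    exact List.ext_getElem (by simp [hl]) (by simp)
  have hprod : ∀ z, (M.map fun a => z - a).prod = ∏ j, (z - zr j) := by
    intro z
    rw [← hzr, Multiset.map_map]
    rfl
  have hzr_le : ∀ j, ‖zr j‖ ≤ r := fun j => hM _ (by
    rw [← hzr]
    exact Multiset.mem_map_of_mem _ (Finset.mem_univ j))
  have hQ0 : ∀ z : ℂ, r < ‖z‖ → ∏ j, (z - zr j) ≠ 0 := by
    intro z hz
    refine Finset.prod_ne_zero_iff.2 fun j _ h => ?_
    rw [sub_eq_zero.1 h] at hz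
    exact absurd (hzr_le j) hz.not_ge
  -- On the boundary circle the cofactor has to be `u` divided by the product.
  let G : ℂ → ℂ := fun z => if ‖z‖ < 1 then g z else u z / ∏ j, (z - zr j)
  have hGg : Set.EqOn G g (ball 0 1) := fun z hz => if_pos (by simpa using hz)
  have hGu : ∀ z ∈ closedBall (0 : ℂ) 1, r < ‖z‖ → G z = u z / ∏ j, (z - zr j) := by
    intro z hz hrz
    by_cases h : ‖z‖ < 1
    · rw [hGg (by simpa using h), hug z (by simpa using h), hprod,
        mul_div_cancel_left₀ _ (hQ0 z hrz)]
    · exact if_neg h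
  refine ⟨zr, fun j => (hzr_le j).trans_lt hr1, G, ?_, hg.congr hGg,
    fun z hz => by rw [hGg hz]; exact hg0 z hz, ?_⟩
  · intro z hz
    by_cases h : ‖z‖ < 1
    · have hzb : z ∈ ball (0 : ℂ) 1 := by simpa using h
      have hnhds := isOpen_ball.mem_nhds hzb
      exact ((hg.continuousOn.continuousAt hnhds).congr
        (hGg.eventuallyEq_of_mem hnhds).symm).continuousWithinAt
    · have hrz : r < ‖z‖ := by linarith
      have hdiv : ContinuousWithinAt (fun z => u z / ∏ j, (z - zr j)) (closedBall 0 1) z :=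
        (huc z hz).div
          (continuous_finsetProd _ fun j _ => by fun_prop).continuousWithinAt (hQ0 z hrz)
      refine hdiv.congr_of_eventuallyEq ?_ (hGu z hz hrz)
      filter_upwards [self_mem_nhdsWithin,
        nhdsWithin_le_nhds ((isOpen_lt continuous_const continuous_norm).mem_nhds hrz)]
        with y hy hry using hGu y hy hry
  · intro z hz
    by_cases h : ‖z‖ < 1
    · have hzb : z ∈ ball (0 : ℂ) 1 := by simpa using h
      rw [hGg hzb, ← hprod]
      exact hug z hzb
    · have hrz : r < ‖z‖ := by linarith
      rw [hGu z hz hrz, mul_div_cancel₀ _ (hQ0 z hrz)]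
end

section
/- Let z* ∈ (0,1) be the unique point with p(z*) = 1 and p(z) < 1 on (z*, 1). Then for every w ∈ (0,1] and every complex z with 0 < |z| < 1, if p(z) = w^{−1} then |z| ≤ z*. -/
/-! Write `r = ‖z‖`. Since the coefficients `p_k` are non-negative, the triangle inequality gives
`|p(z)| ≤ p(r)` (`norm_genPC_le`). If `p(z) = w⁻¹` with `0 < w ≤ 1`, then `p(r) ≥ w⁻¹ ≥ 1`,
and so `r` cannot lie in `(z*, 1)`, where `p < 1`. -/

open Filter Finset

/-- The generating function restricted to real arguments. -/
noncomputable def genP (ν : ℕ) (p : ℤ → ℝ) (x : ℝ) : ℝ :=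
  (∑' k : ℕ, p ((k : ℤ) - (ν : ℤ)) * x ^ k) / x ^ ν

/-- The generating function `p(z) = ∑_{k=-ν}^∞ p_k z^k` on the punctured unit disk. -/
noncomputable def genPC (ν : ℕ) (p : ℤ → ℝ) (z : ℂ) : ℂ :=
  (∑' k : ℕ, (p ((k : ℤ) - (ν : ℤ)) : ℂ) * z ^ k) / z ^ ν

theorem norm_genPC_le {ν : ℕ} {p : ℤ → ℝ} (hp_nonneg : ∀ k : ℤ, 0 ≤ p k)
    (hp_sum : Summable (fun k : ℕ => p ((k : ℤ) - (ν : ℤ)))) {z : ℂ} (hz : ‖z‖ ≤ 1) :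
    ‖genPC ν p z‖ ≤ genP ν p ‖z‖ := by
  have hsum : Summable (fun k : ℕ => p ((k : ℤ) - (ν : ℤ)) * ‖z‖ ^ k) :=
    Summable.of_nonneg_of_le (fun k => mul_nonneg (hp_nonneg _) (by positivity))
      (fun k => mul_le_of_le_one_right (hp_nonneg _) (pow_le_one₀ (norm_nonneg z) hz)) hp_sum
  have hbound : ‖∑' k : ℕ, (p ((k : ℤ) - (ν : ℤ)) : ℂ) * z ^ k‖
      ≤ ∑' k : ℕ, p ((k : ℤ) - (ν : ℤ)) * ‖z‖ ^ k :=
    tsum_of_norm_bounded hsum.hasSum fun k => by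
      rw [norm_mul, norm_pow, Complex.norm_of_nonneg (hp_nonneg _)]
  rw [genPC, genP, norm_div, norm_pow]
  gcongr

/-- With `z* ∈ (0,1)` the unique point with `p(z*) = 1` and `p < 1` on `(z*,1)`:
for every `w ∈ (0,1]` and every complex `z` with `0 < |z| < 1`, if `p(z) = w⁻¹`
then `|z| ≤ z*`. -/
theorem ruin_apriori_root_bound
    (ν : ℕ) (hν : 1 ≤ ν) (p : ℤ → ℝ)
    (hp_nonneg : ∀ k : ℤ, 0 ≤ p k)
    (hp_low : ∀ k : ℤ, k < -(ν : ℤ) → p k = 0)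
    (hp_min : 0 < p (-(ν : ℤ)))
    (hp_sum : HasSum (fun k : ℕ => p ((k : ℤ) - (ν : ℤ))) 1)
    (hmean_sum : Summable (fun k : ℕ => ((k : ℝ) - (ν : ℝ)) * p ((k : ℤ) - (ν : ℤ))))
    (hmean_pos : 0 < ∑' k : ℕ, ((k : ℝ) - (ν : ℝ)) * p ((k : ℤ) - (ν : ℤ)))
    (zs : ℝ) (hzs : zs ∈ Set.Ioo (0 : ℝ) 1)
    (hzs_root : genP ν p zs = 1)
    (hzs_lt : ∀ x ∈ Set.Ioo zs 1, genP ν p x < 1) :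
    ∀ w : ℝ, w ∈ Set.Ioc (0 : ℝ) 1 →
      ∀ z : ℂ, 0 < ‖z‖ → ‖z‖ < 1 →
        genPC ν p z = (w : ℂ)⁻¹ → ‖z‖ ≤ zs := by
  intro w ⟨hw0, hw1⟩ z _ hz1 heq
  by_contra! hlt
  have hle := norm_genPC_le hp_nonneg hp_sum.summable hz1.le
  rw [heq, norm_inv, Complex.norm_of_nonneg hw0.le] at hle
  have h1 : 1 ≤ w⁻¹ := (one_le_inv₀ hw0).2 hw1
  linarith [hzs_lt ‖z‖ ⟨hlt, hz1⟩]
end
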